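/- Consider the Kullback–Leibler fidelity F with y ∈ ℤ^M_{≥0}, b ∈ ℝ^M_{>0} and A ∈ ℝ^{M×N}_{≥0}. Let σ_y := {j : y_j ≠ 0} and let Ã be the submatrix of A formed by the rows indexed by σ_y. Let Φ(x) := Σ_i −log(x_i + η_i) with η_i > 0 for all i. Assume Ã satisfies the LRIP at order K with constant δ < 1, and let X ⊆ ℝ^N_{≥0} be compact. Then there exists a constant C > 0 such that for all x ∈ X and all x' ∈ ℝ^N_{≥0} with x ≠ x' and ‖x − x'‖₀ ≤ K, one has ⟨∇F(x) − ∇F(x'), x − x'⟩ ≥ C·⟨∇Φ(x) − ∇Φ(x'), x − x'⟩. -/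

import Mathlib

open Classical

noncomputable section

/-- `‖x‖₀`: the number of nonzero entries of a vector. -/
def norm0 {ι : Type*} [Fintype ι] (x : ι → ℝ) : ℕ :=
  (Finset.univ.filter fun i => x i ≠ 0).card

/-- Euclidean inner product on `ι → ℝ`. -/
def dotp {ι : Type*} [Fintype ι] (x y : ι → ℝ) : ℝ := ∑ i, x i * y i

/-- squared Euclidean norm. -/
def sqnorm {ι : Type*} [Fintype ι] (x : ι → ℝ) : ℝ := ∑ i, (x i) ^ 2

/-- Euclidean norm. -/
def enorm2 {ι : Type*} [Fintype ι] (x : ι → ℝ) : ℝ := Real.sqrt (sqnorm x)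

/-- gradient via the Fréchet derivative: `(grad F x) i = ∂F/∂x_i(x)`. -/
def grad {ι : Type*} [Fintype ι] [DecidableEq ι] (F : (ι → ℝ) → ℝ) (x : ι → ℝ) : ι → ℝ :=
  fun i => fderiv ℝ F x (Pi.single i 1)

/-- `A` satisfies the LRIP at order `K` with constant `δ`: for every index set `ω` with
`#ω ≤ K` and every `u ∈ ℝ^{#ω}`, `‖A_ω u‖₂² ≥ (1-δ)‖u‖₂²`. -/
def LRIP {m n : Type*} [Fintype m] [Fintype n] [DecidableEq n]
    (A : Matrix m n ℝ) (K : ℕ) (δ : ℝ) : Prop :=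
  ∀ ω : Finset n, ω.card ≤ K → ∀ u : {i // i ∈ ω} → ℝ,
    (1 - δ) * sqnorm u ≤ sqnorm ((A.submatrix id (fun j : {i // i ∈ ω} => (j : n))).mulVec u)

/-- the Kullback--Leibler fidelity term `F(x) = Σ_j ([Ax]_j + b_j + y_j log(y_j/([Ax]_j+b_j)) - y_j)`
(with the convention `y_j log (y_j / ·) = 0` when `y_j = 0`, automatic here since `0 * _ = 0`). -/
def FKL {M N : ℕ} (A : Matrix (Fin M) (Fin N) ℝ) (b : Fin M → ℝ) (y : Fin M → ℕ)
    (x : Fin N → ℝ) : ℝ :=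
  ∑ j, (A.mulVec x j + b j + (y j : ℝ) * Real.log ((y j : ℝ) / (A.mulVec x j + b j)) - (y j : ℝ))

/-- (smoothed) Burg entropy `Φ(x) = Σ_i -log(x_i + η_i)`. -/
def PhiBurg {N : ℕ} (η : Fin N → ℝ) (x : Fin N → ℝ) : ℝ := ∑ i, -Real.log (x i + η i)

/-! Both sides are explicit weighted sums of squares: the Burg side equals
`∑ᵢ (xᵢ - x'ᵢ)² / ((xᵢ + ηᵢ) (x'ᵢ + ηᵢ))` and the Kullback–Leibler side equals
`∑ⱼ yⱼ (A (x - x'))ⱼ² / ((A x + b)ⱼ (A x' + b)ⱼ)`. Both are compared with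
`‖x - x'‖² / (1 + ‖x - x'‖)`, where `‖·‖` is the sup norm. For `0 ≤ x ≤ B` and `x' ≥ 0`, the
difference `|xᵢ - x'ᵢ| ≤ B + x'ᵢ` can be large only if `x'ᵢ` is, so `x'ᵢ + ηᵢ` is bounded below by a
multiple of `1 + |xᵢ - x'ᵢ|`; this bounds the Burg side from above. Conversely `(A x' + b)ⱼ` is
bounded above by a multiple of `1 + ‖x - x'‖`, so the LRIP, applied to the rows with `yⱼ ≥ 1`,
bounds the Kullback–Leibler side from below. -/

section Gradient

variable {ι : Type*} [Fintype ι]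

lemma dotp_grad [DecidableEq ι] (F : (ι → ℝ) → ℝ) (x v : ι → ℝ) :
    dotp (grad F x) v = fderiv ℝ F x v := by
  conv_rhs => rw [pi_eq_sum_univ' v]
  simp only [dotp, grad, map_sum, map_smul, smul_eq_mul, mul_comm]

/-- The symmetrized Bregman divergence `D_F(x, x') + D_F(x', x) = ⟨∇F(x) - ∇F(x'), x - x'⟩`, in
terms of which both sides of the main inequality are expressed. -/
def symmBregman [DecidableEq ι] (F : (ι → ℝ) → ℝ) (x x' : ι → ℝ) : ℝ :=
  dotp (grad F x - grad F x') (x - x')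

lemma symmBregman_eq_fderiv_sub [DecidableEq ι] (F : (ι → ℝ) → ℝ) (x x' : ι → ℝ) :
    symmBregman F x x' = fderiv ℝ F x (x - x') - fderiv ℝ F x' (x - x') := by
  rw [← dotp_grad, ← dotp_grad]
  exact sub_dotProduct _ _ _

end Gradient

section Norm

variable {m n : Type*} [Fintype n]

lemma sqnorm_nonneg (x : n → ℝ) : 0 ≤ sqnorm x :=
  Finset.sum_nonneg fun i _ ↦ sq_nonneg (x i)

lemma norm_sq_le_sqnorm (x : n → ℝ) : ‖x‖ ^ 2 ≤ sqnorm x := by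
  refine (Real.le_sqrt (norm_nonneg x) (sqnorm_nonneg x)).mp ?_
  refine (pi_norm_le_iff_of_nonneg (Real.sqrt_nonneg _)).mpr fun i ↦ Real.abs_le_sqrt ?_
  exact Finset.single_le_sum (f := fun i ↦ x i ^ 2) (fun i _ ↦ sq_nonneg _) (Finset.mem_univ i)

lemma apply_le_of_norm_le {x : n → ℝ} {B : ℝ} (hx : ‖x‖ ≤ B) (i : n) : x i ≤ B :=
  (le_abs_self (x i)).trans ((norm_le_pi_norm x i).trans hx)

lemma exists_mulVec_add_le [Finite m] (A : Matrix m n ℝ) (b : m → ℝ) :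
    ∃ β > 0, ∀ x j, A.mulVec x j + b j ≤ β * (1 + ‖x‖) := by
  cases nonempty_fintype m
  let L := LinearMap.toContinuousLinearMap A.mulVecLin
  refine ⟨‖L‖ + ‖b‖ + 1, by positivity, fun x j ↦ ?_⟩
  have hAx : A.mulVec x j ≤ ‖L‖ * ‖x‖ := apply_le_of_norm_le (L.le_opNorm x) j
  have hbj : b j ≤ ‖b‖ := apply_le_of_norm_le le_rfl j
  calc A.mulVec x j + b j ≤ ‖L‖ * ‖x‖ + ‖b‖ := add_le_add hAx hbj
    _ ≤ (‖L‖ + ‖b‖ + 1) * (1 + ‖x‖) := by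
      have : 0 ≤ ‖L‖ + 1 + (‖b‖ + 1) * ‖x‖ := by positivity
      linarith

lemma mulVec_add_pos {A : Matrix m n ℝ} (hA : ∀ j i, 0 ≤ A j i) {b : m → ℝ} (hb : ∀ j, 0 < b j)
    {x : n → ℝ} (hx : ∀ i, 0 ≤ x i) (j : m) : 0 < A.mulVec x j + b j :=
  add_pos_of_nonneg_of_pos (dotProduct_nonneg_of_nonneg (hA j) hx) (hb j)

end Norm

section LRIP

variable {m n : Type*} [Fintype m] [Fintype n]

lemma sum_subtype_mem_eq_sum {R : Type*} [AddCommMonoid R] {ω : Finset n} {f : n → R}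
    (hf : ∀ i ∉ ω, f i = 0) : ∑ i : {i // i ∈ ω}, f i = ∑ i, f i := by
  rw [← Finset.sum_subtype ω (fun _ ↦ Iff.rfl) f]
  exact Finset.sum_subset (Finset.subset_univ ω) fun i _ ↦ hf i

lemma LRIP.mul_sqnorm_le [DecidableEq n] {A : Matrix m n ℝ} {K : ℕ} {δ : ℝ} (hA : LRIP A K δ)
    {d : n → ℝ} (hd : norm0 d ≤ K) : (1 - δ) * sqnorm d ≤ sqnorm (A.mulVec d) := by
  let ω : Finset n := Finset.univ.filter fun i ↦ d i ≠ 0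
  have hω : ∀ i ∉ ω, d i = 0 := fun i hi ↦ by simpa [ω] using hi
  have hsq : sqnorm (fun i : {i // i ∈ ω} ↦ d i) = sqnorm d :=
    sum_subtype_mem_eq_sum (f := fun i ↦ d i ^ 2) fun i hi ↦ by simp [hω i hi]
  have hmul : (A.submatrix id fun i : {i // i ∈ ω} ↦ (i : n)).mulVec (fun i ↦ d i) = A.mulVec d :=
    funext fun j ↦ sum_subtype_mem_eq_sum (f := fun i ↦ A j i * d i) fun i hi ↦ by simp [hω i hi]
  simpa only [hsq, hmul] using hA ω hd fun i ↦ d i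

lemma sqnorm_restrict_support_le (y : m → ℕ) (v : m → ℝ) :
    sqnorm (fun j : {j // y j ≠ 0} ↦ v j) ≤ ∑ j, y j * v j ^ 2 := by
  have one_le (j : {j // y j ≠ 0}) : (1 : ℝ) ≤ y j := by
    exact_mod_cast Nat.one_le_iff_ne_zero.mpr j.2
  calc sqnorm (fun j : {j // y j ≠ 0} ↦ v j)
      ≤ ∑ j : {j // y j ≠ 0}, y j * v j ^ 2 :=
        Finset.sum_le_sum fun j _ ↦ le_mul_of_one_le_left (sq_nonneg _) (one_le j)
    _ = ∑ j ∈ Finset.univ.filter (y · ≠ 0), y j * v j ^ 2 :=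
        (Finset.sum_subtype _ (by simp) fun j ↦ y j * v j ^ 2).symm
    _ ≤ ∑ j, y j * v j ^ 2 :=
        Finset.sum_le_univ_sum_of_nonneg fun j ↦ by positivity

end LRIP

section Burg

variable {N : ℕ} {η x x' : Fin N → ℝ}

lemma fderiv_PhiBurg_apply (hx : ∀ i, x i + η i ≠ 0) (v : Fin N → ℝ) :
    fderiv ℝ (PhiBurg η) x v = ∑ i, -(v i / (x i + η i)) := by
  have hderiv := HasFDerivAt.fun_sum (u := Finset.univ) fun (i : Fin N) _ ↦
    (((hasFDerivAt_apply (𝕜 := ℝ) i x).add_const (η i)).log (hx i)).neg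
  rw [HasFDerivAt.fderiv (f := PhiBurg η) hderiv]
  simp [div_eq_inv_mul]

lemma symmBregman_PhiBurg (hx : ∀ i, x i + η i ≠ 0) (hx' : ∀ i, x' i + η i ≠ 0) :
    symmBregman (PhiBurg η) x x' = ∑ i, (x i - x' i) ^ 2 / ((x i + η i) * (x' i + η i)) := by
  rw [symmBregman_eq_fderiv_sub, fderiv_PhiBurg_apply hx, fderiv_PhiBurg_apply hx',
    ← Finset.sum_sub_distrib]
  refine Finset.sum_congr rfl fun i _ ↦ ?_
  have hi := hx i
  have hi' := hx' i
  rw [Pi.sub_apply]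
  field_simp
  ring

lemma sq_div_one_add_mono {s t : ℝ} (hs : 0 ≤ s) (hst : s ≤ t) :
    s ^ 2 / (1 + s) ≤ t ^ 2 / (1 + t) := by
  have ht : 0 ≤ t := hs.trans hst
  rw [div_le_div_iff₀ (by positivity) (by positivity)]
  have hsq : s ^ 2 ≤ t ^ 2 := by gcongr
  have hmul : s * t * s ≤ s * t * t := by gcongr
  linarith

lemma sq_sub_div_mul_le {u v B h e : ℝ} (hh : 0 < h) (hu : 0 ≤ u) (huB : u ≤ B) (hv : 0 ≤ v)
    (he : |u - v| ≤ e) :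
    (u - v) ^ 2 / ((u + h) * (v + h)) ≤ (1 + B + h) / h ^ 2 * (e ^ 2 / (1 + e)) := by
  have hB : 0 ≤ B := hu.trans huB
  have habs : |u - v| ≤ B + v := abs_le.mpr ⟨by linarith, by linarith⟩
  have hden : h * (1 + |u - v|) ≤ (1 + B + h) * (v + h) := by
    have : 0 ≤ (1 + B) * v + h ^ 2 := by positivity
    linarith [mul_le_mul_of_nonneg_left habs hh.le]
  calc (u - v) ^ 2 / ((u + h) * (v + h))
      ≤ |u - v| ^ 2 / (h * (h * (1 + |u - v|) / (1 + B + h))) := by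
        rw [sq_abs]
        gcongr
        · linarith
        · rwa [div_le_iff₀' (by positivity)]
    _ = (1 + B + h) / h ^ 2 * (|u - v| ^ 2 / (1 + |u - v|)) := by field_simp
    _ ≤ (1 + B + h) / h ^ 2 * (e ^ 2 / (1 + e)) := by
        gcongr ?_ * ?_
        exact sq_div_one_add_mono (abs_nonneg _) he

lemma symmBregman_PhiBurg_le {B : ℝ} (hη : ∀ i, 0 < η i) (hx : ∀ i, 0 ≤ x i) (hxB : ∀ i, x i ≤ B)
    (hx' : ∀ i, 0 ≤ x' i) :
    symmBregman (PhiBurg η) x x' ≤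
      (∑ i, (1 + B + η i) / η i ^ 2) * (‖x - x'‖ ^ 2 / (1 + ‖x - x'‖)) := by
  rw [symmBregman_PhiBurg (fun i ↦ (add_pos_of_nonneg_of_pos (hx i) (hη i)).ne')
    (fun i ↦ (add_pos_of_nonneg_of_pos (hx' i) (hη i)).ne'), Finset.sum_mul]
  exact Finset.sum_le_sum fun i _ ↦
    sq_sub_div_mul_le (hη i) (hx i) (hxB i) (hx' i) (norm_le_pi_norm (x - x') i)

end Burg

section KullbackLeibler

lemma hasDerivAt_add_mul_log_div_sub (y : ℝ) {z : ℝ} (hz : z ≠ 0) :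
    HasDerivAt (fun z ↦ z + y * Real.log (y / z) - y) (1 - y / z) z := by
  rcases eq_or_ne y 0 with rfl | hy
  · simpa using hasDerivAt_id' z
  · have hdiv : HasDerivAt (fun z ↦ y / z) (-y / z ^ 2) z := by
      simpa [div_eq_mul_inv] using (hasDerivAt_inv hz).const_mul y
    refine (((hasDerivAt_id z).add ((hdiv.log (div_ne_zero hy hz)).const_mul y)).sub_const
      y).congr_deriv ?_
    field_simp
    ring

variable {M N : ℕ} {A : Matrix (Fin M) (Fin N) ℝ} {b : Fin M → ℝ} {y : Fin M → ℕ}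
  {x x' : Fin N → ℝ}

lemma fderiv_FKL_apply (hx : ∀ j, A.mulVec x j + b j ≠ 0) (v : Fin N → ℝ) :
    fderiv ℝ (FKL A b y) x v = ∑ j, (1 - y j / (A.mulVec x j + b j)) * A.mulVec v j := by
  let row (j : Fin M) : (Fin N → ℝ) →L[ℝ] ℝ :=
    (ContinuousLinearMap.proj j).comp (LinearMap.toContinuousLinearMap A.mulVecLin)
  have hderiv := HasFDerivAt.fun_sum (u := Finset.univ) fun (j : Fin M) _ ↦
    (hasDerivAt_add_mul_log_div_sub (y j) (hx j)).comp_hasFDerivAt x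
      ((row j).hasFDerivAt.add_const (b j))
  rw [HasFDerivAt.fderiv (f := FKL A b y) hderiv]
  simp [row]

lemma symmBregman_FKL (hx : ∀ j, A.mulVec x j + b j ≠ 0) (hx' : ∀ j, A.mulVec x' j + b j ≠ 0) :
    symmBregman (FKL A b y) x x' = ∑ j, y j * A.mulVec (x - x') j ^ 2 /
      ((A.mulVec x j + b j) * (A.mulVec x' j + b j)) := by
  rw [symmBregman_eq_fderiv_sub, fderiv_FKL_apply hx, fderiv_FKL_apply hx',
    ← Finset.sum_sub_distrib]
  refine Finset.sum_congr rfl fun j _ ↦ ?_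
  have hj := hx j
  have hj' := hx' j
  rw [Matrix.mulVec_sub, Pi.sub_apply]
  field_simp
  ring

lemma le_symmBregman_FKL {K : ℕ} {δ R : ℝ}
    (hLRIP : LRIP (A.submatrix (fun j : {j // y j ≠ 0} ↦ (j : Fin M)) id) K δ)
    (hx : ∀ j, 0 < A.mulVec x j + b j) (hx' : ∀ j, 0 < A.mulVec x' j + b j)
    (hK : norm0 (x - x') ≤ K) (hR : 0 ≤ R)
    (hxR : ∀ j, (A.mulVec x j + b j) * (A.mulVec x' j + b j) ≤ R) :
    (1 - δ) * sqnorm (x - x') / R ≤ symmBregman (FKL A b y) x x' := by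
  rw [symmBregman_FKL (fun j ↦ (hx j).ne') fun j ↦ (hx' j).ne']
  calc (1 - δ) * sqnorm (x - x') / R
      ≤ (∑ j, y j * A.mulVec (x - x') j ^ 2) / R := by
        gcongr
        exact (hLRIP.mul_sqnorm_le hK).trans (sqnorm_restrict_support_le y (A.mulVec (x - x')))
    _ = ∑ j, y j * A.mulVec (x - x') j ^ 2 / R := Finset.sum_div ..
    _ ≤ ∑ j, y j * A.mulVec (x - x') j ^ 2 /
          ((A.mulVec x j + b j) * (A.mulVec x' j + b j)) :=
        Finset.sum_le_sum fun j _ ↦ div_le_div_of_nonneg_left (by positivity)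
          (mul_pos (hx j) (hx' j)) (hxR j)

lemma exists_le_symmBregman_FKL {K : ℕ} {δ B : ℝ} (hA : ∀ j i, 0 ≤ A j i) (hb : ∀ j, 0 < b j)
    (hδ : δ < 1) (hLRIP : LRIP (A.submatrix (fun j : {j // y j ≠ 0} ↦ (j : Fin M)) id) K δ)
    (hB : 0 ≤ B) :
    ∃ c > 0, ∀ x x' : Fin N → ℝ, (∀ i, 0 ≤ x i) → (∀ i, 0 ≤ x' i) → ‖x‖ ≤ B →
      norm0 (x - x') ≤ K →
      c * (‖x - x'‖ ^ 2 / (1 + ‖x - x'‖)) ≤ symmBregman (FKL A b y) x x' := by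
  obtain ⟨β, hβ, hAb⟩ := exists_mulVec_add_le A b
  have : 0 < 1 - δ := sub_pos.mpr hδ
  refine ⟨(1 - δ) / (β * (1 + B)) ^ 2, by positivity, fun x x' hx hx' hxB hK ↦ ?_⟩
  have hpos := mulVec_add_pos hA hb hx
  have hpos' := mulVec_add_pos hA hb hx'
  set e := ‖x - x'‖
  have he0 : 0 ≤ e := norm_nonneg _
  have hx'B : 1 + ‖x'‖ ≤ (1 + B) * (1 + e) := by
    have htri : ‖x'‖ ≤ ‖x‖ + e := norm_le_norm_add_norm_sub x x'
    linarith [mul_nonneg hB he0]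
  have hprod (j : Fin M) : (A.mulVec x j + b j) * (A.mulVec x' j + b j) ≤
      (β * (1 + B)) ^ 2 * (1 + e) :=
    calc (A.mulVec x j + b j) * (A.mulVec x' j + b j)
        ≤ (β * (1 + B)) * (β * ((1 + B) * (1 + e))) :=
          mul_le_mul ((hAb x j).trans (by gcongr)) ((hAb x' j).trans (by gcongr)) (hpos' j).le
            (by positivity)
      _ = (β * (1 + B)) ^ 2 * (1 + e) := by ring
  calc (1 - δ) / (β * (1 + B)) ^ 2 * (e ^ 2 / (1 + e))
      = (1 - δ) * e ^ 2 / ((β * (1 + B)) ^ 2 * (1 + e)) := div_mul_div_comm ..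
    _ ≤ (1 - δ) * sqnorm (x - x') / ((β * (1 + B)) ^ 2 * (1 + e)) := by
        gcongr
        exact norm_sq_le_sqnorm (x - x')
    _ ≤ symmBregman (FKL A b y) x x' :=
        le_symmBregman_FKL hLRIP hpos hpos' hK (by positivity) hprod

end KullbackLeibler

theorem stmt4_general {M N : ℕ} (K : ℕ)
    (A : Matrix (Fin M) (Fin N) ℝ) (hA : ∀ j i, 0 ≤ A j i)
    (b : Fin M → ℝ) (hb : ∀ j, 0 < b j) (y : Fin M → ℕ)
    (η : Fin N → ℝ) (hη : ∀ i, 0 < η i)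
    (δ : ℝ) (hδ : δ < 1)
    (hLRIP : LRIP (A.submatrix (fun j : {j // y j ≠ 0} => (j : Fin M)) id) K δ)
    (X : Set (Fin N → ℝ)) (hXsub : X ⊆ {x | ∀ i, 0 ≤ x i}) (hXbdd : Bornology.IsBounded X) :
    ∃ C : ℝ, 0 < C ∧ ∀ x ∈ X, ∀ x' : Fin N → ℝ, (∀ i, 0 ≤ x' i) → norm0 (x - x') ≤ K →
      C * dotp (grad (PhiBurg η) x - grad (PhiBurg η) x') (x - x')
        ≤ dotp (grad (FKL A b y) x - grad (FKL A b y) x') (x - x') := by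
  obtain ⟨B, hB, hXB⟩ := hXbdd.exists_pos_norm_le
  obtain ⟨c, hc, hKL⟩ := exists_le_symmBregman_FKL hA hb hδ hLRIP hB.le
  have hS : 0 ≤ ∑ i, (1 + B + η i) / η i ^ 2 :=
    Finset.sum_nonneg fun i _ ↦ by have := hη i; positivity
  set S := ∑ i, (1 + B + η i) / η i ^ 2
  refine ⟨c / (S + 1), by positivity, fun x hx x' hx' hK ↦ ?_⟩
  have hBurg : symmBregman (PhiBurg η) x x' ≤ S * (‖x - x'‖ ^ 2 / (1 + ‖x - x'‖)) :=
    symmBregman_PhiBurg_le hη (hXsub hx) (apply_le_of_norm_le (hXB x hx)) hx'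
  calc c / (S + 1) * symmBregman (PhiBurg η) x x'
      ≤ c / (S + 1) * ((S + 1) * (‖x - x'‖ ^ 2 / (1 + ‖x - x'‖))) := by
        gcongr
        exact hBurg.trans (by gcongr; linarith)
    _ = c * (‖x - x'‖ ^ 2 / (1 + ‖x - x'‖)) := by field_simp
    _ ≤ symmBregman (FKL A b y) x x' := hKL x x' (hXsub hx) hx' (hXB x hx) hK

/-- the KL fidelity satisfies BRSC w.r.t. the Burg entropy on compact sets,
under an LRIP condition on the rows of `A` indexed by the support of `y`. -/
theorem stmt4 {M N : ℕ} (K : ℕ)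
    (A : Matrix (Fin M) (Fin N) ℝ) (hA : ∀ j i, 0 ≤ A j i)
    (b : Fin M → ℝ) (hb : ∀ j, 0 < b j) (y : Fin M → ℕ)
    (η : Fin N → ℝ) (hη : ∀ i, 0 < η i)
    (δ : ℝ) (hδ : δ < 1)
    (hLRIP : LRIP (A.submatrix (fun j : {j // y j ≠ 0} => (j : Fin M)) id) K δ)
    (X : Set (Fin N → ℝ)) (hXsub : X ⊆ {x | ∀ i, 0 ≤ x i}) (hXcomp : IsCompact X) :
    ∃ C : ℝ, 0 < C ∧ ∀ x ∈ X, ∀ x' : Fin N → ℝ, (∀ i, 0 ≤ x' i) → x ≠ x' →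
      norm0 (x - x') ≤ K →
      C * dotp (grad (PhiBurg η) x - grad (PhiBurg η) x') (x - x')
        ≤ dotp (grad (FKL A b y) x - grad (FKL A b y) x') (x - x') := by
  obtain ⟨C, hC, h⟩ :=
    stmt4_general K A hA b hb y η hη δ hδ hLRIP X hXsub hXcomp.isBounded
  exact ⟨C, hC, fun x hx x' hx' _ ↦ h x hx x' hx'⟩
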